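/- Subadditive expectation bound: for dimension d ≥ 1, every k ≥ 1, every λ > 0, and all 0 < s ≤ t, one has E[F_{k,λ}(t)] ≤ ⌈t/s⌉^d · E[F_{k,λ}(s)]. -/

import Mathlib

open MeasureTheory ProbabilityTheory Filter

noncomputable instance instDecEqEuclidean (d : ℕ) :
    DecidableEq (EuclideanSpace ℝ (Fin d)) := Classical.decEq _

/-- `maxColorable d k r V` is the maximum number of vertices of the geometric
graph `G_r(V)` (edges between distinct points of `V` at Euclidean distance at
most `r`) that can be properly colored with `k` colors, i.e. the maximum
cardinality of a subset `S ⊆ V` admitting a proper `k`-coloring. -/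
noncomputable def maxColorable (d k : ℕ) (r : ℝ)
    (V : Finset (EuclideanSpace ℝ (Fin d))) : ℕ :=
  sSup {m : ℕ | ∃ S : Finset (EuclideanSpace ℝ (Fin d)), S ⊆ V ∧ S.card = m ∧
    ∃ c : EuclideanSpace ℝ (Fin d) → Fin k,
      ∀ u ∈ S, ∀ v ∈ S, u ≠ v → dist u v ≤ r → c u ≠ c v}

/-- The unit cube `[0,1]^d`. -/
def unitCube (d : ℕ) : Set (EuclideanSpace ℝ (Fin d)) :=
  {x | ∀ i, x i ∈ Set.Icc (0 : ℝ) 1}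

/-- The uniform distribution on the unit cube `[0,1]^d` (Lebesgue measure
restricted to the cube, which has total mass one). -/
noncomputable def uniformCube (d : ℕ) : Measure (EuclideanSpace ℝ (Fin d)) :=
  volume.restrict (unitCube d)

/-- `EH d k r n = E[H_{k,r}(n)] = E[N_{k,r}({X_1,…,X_n})]` for `X_1,…,X_n`
i.i.d. uniform on the unit cube `[0,1]^d`. -/
noncomputable def EH (d k : ℕ) (r : ℝ) (n : ℕ) : ℝ :=
  ∫ x : Fin n → EuclideanSpace ℝ (Fin d),
    (maxColorable d k r (Finset.image x Finset.univ) : ℝ)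
    ∂(Measure.pi fun _ => uniformCube d)

/-- `EF d k lam t = E[F_{k,lam}(t)] = ∑_n P(Po(lam t^d) = n) E[H_{k,1/t}(n)]`,
the expected maximum number of `k`-colorable vertices of the unit-distance
geometric graph on a Poisson process of intensity `lam` in `[0,t]^d`. -/
noncomputable def EF (d k : ℕ) (lam t : ℝ) : ℝ :=
  ∑' n : ℕ, poissonPMFReal (Real.toNNReal (lam * t ^ d)) n * EH d k (1 / t) n

/-- The normalized expectation `\bar F_{k,lam}(t) = E[F_{k,lam}(t)]/(lam t^d)`. -/
noncomputable def Fbar (d k : ℕ) (lam t : ℝ) : ℝ :=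
  EF d k lam t / (lam * t ^ d)

/-- The constant `a_{k,lam} = inf_{t>0} \bar F_{k,lam}(t)`. -/
noncomputable def aConst (d k : ℕ) (lam : ℝ) : ℝ :=
  sInf {x : ℝ | ∃ t : ℝ, 0 < t ∧ x = Fbar d k lam t}

/-- The volume `V_d(r) = π^{d/2} r^d / Γ(d/2 + 1)` of the `d`-dimensional
Euclidean ball of radius `r`. -/
noncomputable def ballVol (d : ℕ) (r : ℝ) : ℝ :=
  Real.pi ^ ((d : ℝ) / 2) * r ^ d / Real.Gamma ((d : ℝ) / 2 + 1)

open scoped ENNReal Nat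

/-! ### Combinatorics of `maxColorable` -/

lemma mc_bdd (d k : ℕ) (r : ℝ) (V : Finset (EuclideanSpace ℝ (Fin d))) :
    BddAbove {m : ℕ | ∃ S : Finset (EuclideanSpace ℝ (Fin d)), S ⊆ V ∧ S.card = m ∧
    ∃ c : EuclideanSpace ℝ (Fin d) → Fin k,
      ∀ u ∈ S, ∀ v ∈ S, u ≠ v → dist u v ≤ r → c u ≠ c v} := by
  refine ⟨V.card, ?_⟩
  rintro m ⟨S, hS, rfl, -⟩
  exact Finset.card_le_card hS

lemma le_mc {d k : ℕ} {r : ℝ} {V : Finset (EuclideanSpace ℝ (Fin d))}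
    (S : Finset (EuclideanSpace ℝ (Fin d))) (hS : S ⊆ V)
    (c : EuclideanSpace ℝ (Fin d) → Fin k)
    (hc : ∀ u ∈ S, ∀ v ∈ S, u ≠ v → dist u v ≤ r → c u ≠ c v) :
    S.card ≤ maxColorable d k r V :=
  le_csSup (mc_bdd d k r V) ⟨S, hS, rfl, c, hc⟩

lemma mc_spec {d k : ℕ} (hk : 1 ≤ k) (r : ℝ) (V : Finset (EuclideanSpace ℝ (Fin d))) :
    ∃ S : Finset (EuclideanSpace ℝ (Fin d)), S ⊆ V ∧ S.card = maxColorable d k r V ∧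
    ∃ c : EuclideanSpace ℝ (Fin d) → Fin k,
      ∀ u ∈ S, ∀ v ∈ S, u ≠ v → dist u v ≤ r → c u ≠ c v := by
  have := Nat.sSup_mem (s := {m : ℕ | ∃ S : Finset (EuclideanSpace ℝ (Fin d)), S ⊆ V ∧
    S.card = m ∧ ∃ c : EuclideanSpace ℝ (Fin d) → Fin k,
      ∀ u ∈ S, ∀ v ∈ S, u ≠ v → dist u v ≤ r → c u ≠ c v})
    ⟨0, ∅, by simp, by simp, fun _ => ⟨0, hk⟩, by simp⟩ (mc_bdd d k r V)
  exact this

lemma mc_le_card {d k : ℕ} (hk : 1 ≤ k) (r : ℝ) (V : Finset (EuclideanSpace ℝ (Fin d))) :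
    maxColorable d k r V ≤ V.card := by
  obtain ⟨S, hS, h, -⟩ := mc_spec hk r V
  rw [← h]
  exact Finset.card_le_card hS

lemma mc_mono {d k : ℕ} (hk : 1 ≤ k) (r : ℝ) {V W : Finset (EuclideanSpace ℝ (Fin d))}
    (h : V ⊆ W) : maxColorable d k r V ≤ maxColorable d k r W := by
  obtain ⟨S, hS, hm, c, hc⟩ := mc_spec hk r V
  rw [← hm]
  exact le_mc S (hS.trans h) c hc

open Classical in
lemma mc_sub {d k : ℕ} (hk : 1 ≤ k) (r : ℝ) (V : Finset (EuclideanSpace ℝ (Fin d)))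
    {ι : Type*} [Fintype ι] (A : ι → Set (EuclideanSpace ℝ (Fin d)))
    (hV : ∀ v ∈ V, ∃ i, v ∈ A i) :
    maxColorable d k r V ≤ ∑ i, maxColorable d k r (V.filter (· ∈ A i)) := by
  obtain ⟨S, hS, hm, c, hc⟩ := mc_spec hk r V
  rw [← hm]
  have h1 : S ⊆ Finset.univ.biUnion (fun i => S.filter (· ∈ A i)) := by
    intro v hv
    obtain ⟨i, hi⟩ := hV v (hS hv)
    simp only [Finset.mem_biUnion, Finset.mem_univ, true_and, Finset.mem_filter]
    exact ⟨i, hv, hi⟩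
  refine (Finset.card_le_card h1).trans (Finset.card_biUnion_le.trans ?_)
  refine Finset.sum_le_sum fun i _ => ?_
  refine le_mc _ (Finset.filter_subset_filter _ hS) c ?_
  intro u hu v hv
  exact hc u (Finset.mem_filter.1 hu).1 v (Finset.mem_filter.1 hv).1

lemma mc_image_le {d k : ℕ} (hk : 1 ≤ k) (r r' : ℝ) (V : Finset (EuclideanSpace ℝ (Fin d)))
    (e : EuclideanSpace ℝ (Fin d) ≃ EuclideanSpace ℝ (Fin d))
    (he : ∀ x y, dist x y ≤ r → dist (e x) (e y) ≤ r') :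
    maxColorable d k r' (V.image e) ≤ maxColorable d k r V := by
  obtain ⟨S, hS, hm, c, hc⟩ := mc_spec hk r' (V.image e)
  rw [← hm, ← Finset.card_image_of_injective S e.symm.injective]
  refine le_mc _ ?_ (c ∘ e) ?_
  · intro v hv
    obtain ⟨w, hw, rfl⟩ := Finset.mem_image.1 hv
    obtain ⟨z, hz, rfl⟩ := Finset.mem_image.1 (hS hw)
    simpa using hz
  · intro u hu v hv huv hd
    obtain ⟨u, hu', rfl⟩ := Finset.mem_image.1 hu
    obtain ⟨v, hv', rfl⟩ := Finset.mem_image.1 hv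
    have := hc u hu' v hv' (fun h => huv (by rw [h])) (by simpa using he _ _ hd)
    simpa using this

lemma mc_image {d k : ℕ} (hk : 1 ≤ k) (r r' : ℝ) (V : Finset (EuclideanSpace ℝ (Fin d)))
    (e : EuclideanSpace ℝ (Fin d) ≃ EuclideanSpace ℝ (Fin d))
    (he : ∀ x y, dist x y ≤ r ↔ dist (e x) (e y) ≤ r') :
    maxColorable d k r' (V.image e) = maxColorable d k r V := by
  apply le_antisymm (mc_image_le hk r r' V e fun x y => (he x y).1)
  have := mc_image_le hk r' r (V.image e) e.symm fun x y h => by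
    rw [he]; simpa using h
  rwa [Finset.image_image, Equiv.symm_comp_self, Finset.image_id] at this

open Classical in
lemma mc_measurable_filter {d k : ℕ} (hk : 1 ≤ k) (r : ℝ)
    (A : Set (EuclideanSpace ℝ (Fin d))) (hA : MeasurableSet A) (n : ℕ) :
    Measurable fun x : Fin n → EuclideanSpace ℝ (Fin d) =>
      maxColorable d k r ((Finset.image x Finset.univ).filter (· ∈ A)) := by
  refine measurable_of_Ici fun m => ?_
  have : (fun x : Fin n → EuclideanSpace ℝ (Fin d) =>
      maxColorable d k r ((Finset.image x Finset.univ).filter (· ∈ A))) ⁻¹' Set.Ici m =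
      ⋃ I : {I : Finset (Fin n) // m ≤ I.card}, ⋃ c : Fin n → Fin k,
        ⋂ i : Fin n, ⋂ j : Fin n, {x | i ∈ I.1 → j ∈ I.1 → x i ∈ A ∧ (i ≠ j →
          ¬ (x i = x j) ∧ (c i = c j → ¬ (dist (x i) (x j) ≤ r)))} := by
    ext x
    simp only [Set.mem_preimage, Set.mem_Ici, Set.mem_iUnion, Set.mem_iInter, Set.mem_ofPred_eq]
    constructor
    · intro h
      obtain ⟨S, hS, hm, c, hc⟩ := mc_spec hk r ((Finset.image x Finset.univ).filter (· ∈ A))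
      have hsurj : Set.SurjOn x (Finset.univ : Finset (Fin n)) (S : Set _) := by
        intro v hv
        obtain ⟨i, -, hi⟩ := Finset.mem_image.1 (Finset.mem_filter.1 (hS hv)).1
        exact ⟨i, by simp, hi⟩
      obtain ⟨I, -, hinj, hI⟩ := Finset.exists_subset_injOn_image_eq_of_surjOn _ _ hsurj
      have hcard : I.card = S.card := by
        rw [← hI, Finset.card_image_of_injOn hinj]
      refine ⟨⟨I, by omega⟩, fun i => c (x i), fun i j hi hj => ⟨(Finset.mem_filter.1 (hS (by
        rw [← hI]; exact Finset.mem_image_of_mem _ hi))).2, fun hij => ?_⟩⟩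
      have hne : x i ≠ x j := fun h => hij (hinj hi hj h)
      refine ⟨hne, fun hcc hd => ?_⟩
      exact hc (x i) (by rw [← hI]; exact Finset.mem_image_of_mem _ hi) (x j)
        (by rw [← hI]; exact Finset.mem_image_of_mem _ hj) hne hd hcc
    · rintro ⟨⟨I, hI⟩, c, hc⟩
      have hinj : Set.InjOn x I := by
        intro i hi j hj hij
        by_contra hne
        exact ((hc i j hi hj).2 hne).1 hij
      let c' : EuclideanSpace ℝ (Fin d) → Fin k := fun v =>
        if h : ∃ i ∈ I, x i = v then c h.choose else ⟨0, hk⟩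
      have hc' : ∀ i ∈ I, c' (x i) = c i := by
        intro i hi
        have h : ∃ j ∈ I, x j = x i := ⟨i, hi, rfl⟩
        have h2 : h.choose = i := hinj h.choose_spec.1 hi h.choose_spec.2
        simp only [c', dif_pos h, h2]
      refine hI.trans ?_
      rw [← Finset.card_image_of_injOn hinj]
      refine le_mc _ (fun v hv => ?_) c' ?_
      · obtain ⟨i, hi, rfl⟩ := Finset.mem_image.1 hv
        exact Finset.mem_filter.2 ⟨Finset.mem_image_of_mem _ (Finset.mem_univ _), (hc i i hi hi).1⟩
      intro u hu v hv huv hd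
      obtain ⟨i, hi, rfl⟩ := Finset.mem_image.1 hu
      obtain ⟨j, hj, rfl⟩ := Finset.mem_image.1 hv
      rw [hc' i hi, hc' j hj]
      exact fun h => ((hc i j hi hj).2 (fun h => huv (by rw [h]))).2 h hd
  rw [this]
  refine MeasurableSet.iUnion fun I => MeasurableSet.iUnion fun c =>
    MeasurableSet.iInter fun i => MeasurableSet.iInter fun j => ?_
  have h1 : MeasurableSet {x : Fin n → EuclideanSpace ℝ (Fin d) | x i = x j} :=
    measurableSet_eq_fun (measurable_pi_apply i) (measurable_pi_apply j)
  have h2 : MeasurableSet {x : Fin n → EuclideanSpace ℝ (Fin d) | dist (x i) (x j) ≤ r} :=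
    measurableSet_le ((measurable_pi_apply i).dist (measurable_pi_apply j)) measurable_const
  exact (MeasurableSet.const _).imp ((MeasurableSet.const _).imp ((measurable_pi_apply i hA).inter
    ((MeasurableSet.const _).imp (h1.compl.inter ((MeasurableSet.const _).imp h2.compl)))))

lemma mc_measurable {d k : ℕ} (hk : 1 ≤ k) (r : ℝ) (n : ℕ) :
    Measurable fun x : Fin n → EuclideanSpace ℝ (Fin d) =>
      maxColorable d k r (Finset.image x Finset.univ) := by
  simpa using mc_measurable_filter (d := d) hk r Set.univ MeasurableSet.univ n

/-! ### Poisson expectations of functionals of finite sets -/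

/-- `n`-point integral of a functional of finite sets. -/
noncomputable def nInt {d : ℕ} (f : Finset (EuclideanSpace ℝ (Fin d)) → ℝ≥0∞)
    (μ : Measure (EuclideanSpace ℝ (Fin d))) (n : ℕ) : ℝ≥0∞ :=
  ∫⁻ x : Fin n → EuclideanSpace ℝ (Fin d), f (Finset.image x Finset.univ)
    ∂(Measure.pi fun _ => μ)

/-- Expectation of a functional of a Poisson process with intensity measure `μ`. -/
noncomputable def PE {d : ℕ} (f : Finset (EuclideanSpace ℝ (Fin d)) → ℝ≥0∞)
    (μ : Measure (EuclideanSpace ℝ (Fin d))) : ℝ≥0∞ :=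
  ENNReal.ofReal (Real.exp (-(μ Set.univ).toReal)) * ∑' n : ℕ, ((n ! : ℕ) : ℝ≥0∞)⁻¹ * nInt f μ n

lemma lint_reindex {d n : ℕ} (f : Finset (EuclideanSpace ℝ (Fin d)) → ℝ≥0∞)
    (μ : Measure (EuclideanSpace ℝ (Fin d))) [SigmaFinite μ] {ι : Type} [Fintype ι]
    (e : Fin n ≃ ι) :
    ∫⁻ y : ι → EuclideanSpace ℝ (Fin d), f (Finset.image y Finset.univ)
      ∂(Measure.pi fun _ => μ) = nInt f μ n := by
  have h := measurePreserving_piCongrLeft (fun _ : ι => μ) e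
  rw [nInt, ← h.map_eq, lintegral_map_equiv]
  refine lintegral_congr fun x => ?_
  congr 1
  ext v
  simp only [Finset.mem_image, Finset.mem_univ, true_and]
  constructor
  · rintro ⟨i, rfl⟩
    refine ⟨e.symm i, ?_⟩
    obtain ⟨j, rfl⟩ := e.surjective i
    rw [MeasurableEquiv.piCongrLeft_apply_apply]
    simp
  · rintro ⟨j, rfl⟩
    exact ⟨e j, MeasurableEquiv.piCongrLeft_apply_apply
      (β := fun _ => EuclideanSpace ℝ (Fin d)) e x j⟩

lemma meas_reindex {d n : ℕ} (f : Finset (EuclideanSpace ℝ (Fin d)) → ℝ≥0∞)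
    (hf : ∀ n, Measurable fun x : Fin n → EuclideanSpace ℝ (Fin d) =>
      f (Finset.image x Finset.univ)) {ι : Type} [Fintype ι]
    (e : Fin n ≃ ι) :
    Measurable fun y : ι → EuclideanSpace ℝ (Fin d) => f (Finset.image y Finset.univ) := by
  have h : Measurable fun y : ι → EuclideanSpace ℝ (Fin d) => (fun i : Fin n => y (e i)) :=
    measurable_pi_lambda _ fun i => measurable_pi_apply _
  have h2 := (hf n).comp h
  convert h2 using 2 with y
  simp only [Function.comp]
  congr 1
  ext v
  simp only [Finset.mem_image, Finset.mem_univ, true_and]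
  exact e.surjective.exists

open Classical in
lemma box_integral {d n : ℕ} (f : Finset (EuclideanSpace ℝ (Fin d)) → ℝ≥0∞)
    (hf : ∀ n, Measurable fun x : Fin n → EuclideanSpace ℝ (Fin d) =>
      f (Finset.image x Finset.univ))
    (μ : Measure (EuclideanSpace ℝ (Fin d))) [IsFiniteMeasure μ]
    (A : Set (EuclideanSpace ℝ (Fin d))) (hA : MeasurableSet A) (J : Finset (Fin n)) :
    ∫⁻ x in (Set.univ.pi fun i : Fin n => if i ∈ J then A else Aᶜ),
      f ((Finset.image x Finset.univ).filter (· ∈ A)) ∂(Measure.pi fun _ => μ)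
      = nInt f (μ.restrict A) J.card * (μ Aᶜ) ^ (n - J.card) := by
  have hbox : MeasurableSet (Set.univ.pi fun i : Fin n => if i ∈ J then A else Aᶜ) := by
    refine MeasurableSet.univ_pi fun i => ?_
    split_ifs
    exacts [hA, hA.compl]
  have h1 : ∀ x ∈ (Set.univ.pi fun i : Fin n => if i ∈ J then A else Aᶜ),
      f ((Finset.image x Finset.univ).filter (· ∈ A)) =
      f (Finset.image (fun i : {i // i ∈ J} => x i) Finset.univ) := by
    intro x hx
    congr 1
    have hx' : ∀ i, x i ∈ A ↔ i ∈ J := by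
      intro i
      have := hx i (Set.mem_univ i)
      by_cases hi : i ∈ J
      · simp only [hi, if_true] at this
        simp [hi, this]
      · simp only [hi, if_false] at this
        simpa [hi] using this
    ext v
    simp only [Finset.mem_filter, Finset.mem_image, Finset.mem_univ, true_and, Subtype.exists]
    constructor
    · rintro ⟨⟨i, rfl⟩, hv⟩
      exact ⟨i, (hx' i).1 hv, rfl⟩
    · rintro ⟨i, hi, rfl⟩
      exact ⟨⟨i, rfl⟩, (hx' i).2 hi⟩
  rw [setLIntegral_congr_fun hbox h1, Measure.restrict_pi_pi]
  have hmp := measurePreserving_piEquivPiSubtypeProd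
    (fun i : Fin n => μ.restrict (if i ∈ J then A else Aᶜ)) (fun i => i ∈ J)
  set e := J.equivFin.symm
  have hmeas := meas_reindex f hf e
  have h2 : ∫⁻ x : Fin n → EuclideanSpace ℝ (Fin d),
      f (Finset.image (fun i : {i // i ∈ J} => x i) Finset.univ)
      ∂(Measure.pi fun i : Fin n => μ.restrict (if i ∈ J then A else Aᶜ)) =
      ∫⁻ z, f (Finset.image z.1 Finset.univ) ∂(
        (Measure.pi fun i : {i // i ∈ J} => μ.restrict (if i.1 ∈ J then A else Aᶜ)).prod
        (Measure.pi fun i : {i // i ∉ J} => μ.restrict (if i.1 ∈ J then A else Aᶜ))) := by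
    refine (lintegral_map_equiv (fun z => f (Finset.image z.1 Finset.univ))
      (MeasurableEquiv.piEquivPiSubtypeProd (fun _ : Fin n => EuclideanSpace ℝ (Fin d))
        (fun i => i ∈ J))).symm.trans ?_
    rw [hmp.map_eq]
    congr!
  have hmeas2 : Measurable fun z : ({i // i ∈ J} → EuclideanSpace ℝ (Fin d)) ×
      ({i // i ∉ J} → EuclideanSpace ℝ (Fin d)) => f (Finset.image z.1 Finset.univ) :=
    hmeas.comp measurable_fst
  rw [h2, lintegral_prod _ hmeas2.aemeasurable]
  simp only [lintegral_const]
  have e1 : (fun i : {i // i ∈ J} => μ.restrict (if i.1 ∈ J then A else Aᶜ)) =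
      fun _ => μ.restrict A := by
    funext i; simp
  have e2 : (fun i : {i // i ∉ J} => μ.restrict (if i.1 ∈ J then A else Aᶜ)) =
      fun _ => μ.restrict Aᶜ := by
    funext i; simp [i.2]
  rw [lintegral_mul_const _ hmeas, e1, e2, Measure.pi_univ, lint_reindex f _ e]
  congr 1
  simp [Fintype.card_subtype_compl]

open Classical in
lemma nInt_filter {d : ℕ} (f : Finset (EuclideanSpace ℝ (Fin d)) → ℝ≥0∞)
    (hf : ∀ n, Measurable fun x : Fin n → EuclideanSpace ℝ (Fin d) =>
      f (Finset.image x Finset.univ))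
    (μ : Measure (EuclideanSpace ℝ (Fin d))) [IsFiniteMeasure μ]
    (A : Set (EuclideanSpace ℝ (Fin d))) (hA : MeasurableSet A) (n : ℕ) :
    nInt (fun V => f (V.filter (· ∈ A))) μ n =
      ∑ j ∈ Finset.range (n + 1), (n.choose j) •
        (nInt f (μ.restrict A) j * (μ Aᶜ) ^ (n - j)) := by
  have hU : (⋃ J ∈ (Finset.univ : Finset (Fin n)).powerset,
      (Set.univ.pi fun i : Fin n => if i ∈ J then A else Aᶜ)) = Set.univ := by
    rw [Set.eq_univ_iff_forall]
    intro x
    simp only [Set.mem_iUnion]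
    refine ⟨Finset.univ.filter (fun i => x i ∈ A), by simp, ?_⟩
    intro i _
    by_cases hi : x i ∈ A <;> simp [hi]
  have hdisj : Set.PairwiseDisjoint (((Finset.univ : Finset (Fin n)).powerset :
      Finset (Finset (Fin n))) : Set (Finset (Fin n)))
      (fun J => (Set.univ.pi fun i : Fin n => if i ∈ J then A else Aᶜ)) := by
    intro J _ K _ hJK
    rw [Function.onFun, Set.disjoint_left]
    intro x hx hy
    apply hJK
    ext i
    have h1 := hx i (Set.mem_univ i)
    have h2 := hy i (Set.mem_univ i)
    by_cases hi : i ∈ J <;> by_cases hi' : i ∈ K <;> simp_all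
  have hm : ∀ J ∈ (Finset.univ : Finset (Fin n)).powerset,
      MeasurableSet (Set.univ.pi fun i : Fin n => if i ∈ J then A else Aᶜ) := by
    intro J _
    refine MeasurableSet.univ_pi fun i => ?_
    split_ifs
    exacts [hA, hA.compl]
  rw [nInt, ← setLIntegral_univ, ← hU, lintegral_biUnion_finset hdisj hm]
  simp_rw [box_integral f hf μ A hA]
  rw [Finset.sum_powerset_apply_card (fun j => nInt f (μ.restrict A) j * (μ Aᶜ) ^ (n - j))]
  simp

lemma tsum_cauchy (a b : ℕ → ℝ≥0∞) :
    ∑' n : ℕ, ∑ p ∈ Finset.HasAntidiagonal.antidiagonal n, a p.1 * b p.2 = (∑' n, a n) * ∑' n, b n := by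
  calc ∑' n : ℕ, ∑ p ∈ Finset.HasAntidiagonal.antidiagonal n, a p.1 * b p.2
      = ∑' n : ℕ, ∑' p : Finset.HasAntidiagonal.antidiagonal n, a p.1.1 * b p.1.2 := by
        refine tsum_congr fun n => ?_
        rw [tsum_fintype, Finset.sum_coe_sort (Finset.HasAntidiagonal.antidiagonal n) (fun p => a p.1 * b p.2)]
    _ = ∑' z : (Σ n : ℕ, Finset.HasAntidiagonal.antidiagonal n), a z.2.1.1 * b z.2.1.2 :=
        (ENNReal.tsum_sigma' (fun z : (Σ n : ℕ, Finset.HasAntidiagonal.antidiagonal n) =>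
          a z.2.1.1 * b z.2.1.2)).symm
    _ = ∑' p : ℕ × ℕ, a p.1 * b p.2 :=
        (Finset.HasAntidiagonal.sigmaAntidiagonalEquivProd (A := ℕ)).tsum_eq
          (fun p : ℕ × ℕ => a p.1 * b p.2)
    _ = _ := by
        rw [ENNReal.tsum_prod']
        simp_rw [ENNReal.tsum_mul_left, ENNReal.tsum_mul_right]

lemma tsum_exp (x : ℝ≥0∞) (hx : x ≠ ∞) :
    ∑' n : ℕ, ((n ! : ℕ) : ℝ≥0∞)⁻¹ * x ^ n = ENNReal.ofReal (Real.exp x.toReal) := by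
  rw [Real.exp_eq_exp_ℝ, NormedSpace.exp_eq_tsum_div,
    ENNReal.ofReal_tsum_of_nonneg (fun n => by positivity)
      (Real.summable_pow_div_factorial _)]
  refine tsum_congr fun n => ?_
  rw [ENNReal.ofReal_div_of_pos (by positivity), ENNReal.ofReal_pow (by positivity),
    ENNReal.ofReal_toReal hx, ENNReal.ofReal_natCast, div_eq_mul_inv, mul_comm]

open Classical in
/-- Restriction (thinning) property of Poisson processes. -/
lemma PE_filter {d : ℕ} (f : Finset (EuclideanSpace ℝ (Fin d)) → ℝ≥0∞)
    (hf : ∀ n, Measurable fun x : Fin n → EuclideanSpace ℝ (Fin d) =>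
      f (Finset.image x Finset.univ))
    (μ : Measure (EuclideanSpace ℝ (Fin d))) [IsFiniteMeasure μ]
    (A : Set (EuclideanSpace ℝ (Fin d))) (hA : MeasurableSet A) :
    PE (fun V => f (V.filter (· ∈ A))) μ = PE f (μ.restrict A) := by
  have key : ∑' n : ℕ, ((n ! : ℕ) : ℝ≥0∞)⁻¹ * nInt (fun V => f (V.filter (· ∈ A))) μ n =
      (∑' n : ℕ, ((n ! : ℕ) : ℝ≥0∞)⁻¹ * nInt f (μ.restrict A) n) *
        ENNReal.ofReal (Real.exp (μ Aᶜ).toReal) := by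
    rw [← tsum_exp _ (measure_ne_top μ _), ← tsum_cauchy]
    refine tsum_congr fun n => ?_
    rw [nInt_filter f hf μ A hA, Finset.Nat.sum_antidiagonal_eq_sum_range_succ_mk, Finset.mul_sum]
    refine Finset.sum_congr rfl fun j hj => ?_
    have hj' : j ≤ n := Nat.lt_succ_iff.1 (Finset.mem_range.1 hj)
    have h3 : ((n ! : ℕ) : ℝ≥0∞)⁻¹ * (n.choose j : ℝ≥0∞) =
        ((j ! : ℕ) : ℝ≥0∞)⁻¹ * (((n - j)! : ℕ) : ℝ≥0∞)⁻¹ := by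
      have hn : ((n ! : ℕ) : ℝ≥0∞) ≠ 0 := by exact_mod_cast n.factorial_ne_zero
      have hn1 : ((j ! : ℕ) : ℝ≥0∞) ≠ 0 := by exact_mod_cast j.factorial_ne_zero
      have hn2 : (((n - j)! : ℕ) : ℝ≥0∞) ≠ 0 := by exact_mod_cast (n - j).factorial_ne_zero
      rw [← ENNReal.mul_inv (Or.inl hn1) (Or.inr hn2), ← Nat.choose_mul_factorial_mul_factorial hj']
      have hc : ((n.choose j : ℕ) : ℝ≥0∞) ≠ 0 := by exact_mod_cast (Nat.choose_pos hj').ne'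
      push_cast
      rw [mul_assoc, ENNReal.mul_inv (Or.inl hc) (Or.inl (ENNReal.natCast_ne_top _)), mul_comm,
        ← mul_assoc, ENNReal.mul_inv_cancel hc (ENNReal.natCast_ne_top _), one_mul]
    rw [nsmul_eq_mul, ← mul_assoc, h3]
    ring
  have hμ : (μ Set.univ).toReal = (μ A).toReal + (μ Aᶜ).toReal := by
    rw [← ENNReal.toReal_add (measure_ne_top _ _) (measure_ne_top _ _), measure_add_measure_compl hA]
  rw [PE, PE, key, Measure.restrict_apply_univ, hμ, neg_add, Real.exp_add,
    ENNReal.ofReal_mul (Real.exp_pos _).le]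
  have h4 : ENNReal.ofReal (Real.exp (-(μ Aᶜ).toReal)) * ENNReal.ofReal (Real.exp (μ Aᶜ).toReal)
      = 1 := by
    rw [← ENNReal.ofReal_mul (Real.exp_pos _).le, ← Real.exp_add]
    simp
  calc _ = ENNReal.ofReal (Real.exp (-(μ A).toReal)) *
      (∑' n : ℕ, ((n ! : ℕ) : ℝ≥0∞)⁻¹ * nInt f (μ.restrict A) n) *
      (ENNReal.ofReal (Real.exp (-(μ Aᶜ).toReal)) * ENNReal.ofReal (Real.exp (μ Aᶜ).toReal)) := by
        ring
    _ = _ := by rw [h4, mul_one]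


/-- `maxColorable` as an extended nonnegative functional. -/
noncomputable def mcE (d k : ℕ) (r : ℝ) (V : Finset (EuclideanSpace ℝ (Fin d))) : ℝ≥0∞ :=
  (maxColorable d k r V : ℝ≥0∞)

lemma mcE_meas {d k : ℕ} (hk : 1 ≤ k) (r : ℝ) (n : ℕ) :
    Measurable fun x : Fin n → EuclideanSpace ℝ (Fin d) =>
      mcE d k r (Finset.image x Finset.univ) :=
  measurable_from_top.comp (mc_measurable hk r n)

lemma PE_mono {d : ℕ} {f g : Finset (EuclideanSpace ℝ (Fin d)) → ℝ≥0∞} (h : ∀ V, f V ≤ g V)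
    (μ : Measure (EuclideanSpace ℝ (Fin d))) : PE f μ ≤ PE g μ := by
  unfold PE nInt
  gcongr
  exact h _

lemma PE_restrict_le {d k : ℕ} (hk : 1 ≤ k) (r : ℝ)
    (μ : Measure (EuclideanSpace ℝ (Fin d))) [IsFiniteMeasure μ]
    (A : Set (EuclideanSpace ℝ (Fin d))) (hA : MeasurableSet A) :
    PE (mcE d k r) (μ.restrict A) ≤ PE (mcE d k r) μ := by
  classical
  rw [← PE_filter _ (mcE_meas hk r) μ A hA]
  refine PE_mono (fun V => ?_) μ
  exact Nat.cast_le.2 (mc_mono hk r (Finset.filter_subset _ V))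

lemma PE_cover {d k : ℕ} (hk : 1 ≤ k) (r : ℝ)
    (μ : Measure (EuclideanSpace ℝ (Fin d))) [IsFiniteMeasure μ]
    {ι : Type*} [Fintype ι] (A : ι → Set (EuclideanSpace ℝ (Fin d)))
    (hA : ∀ i, MeasurableSet (A i)) (hcov : ∀ᵐ x ∂μ, ∃ i, x ∈ A i) :
    PE (mcE d k r) μ ≤ ∑ i, PE (mcE d k r) (μ.restrict (A i)) := by
  classical
  simp_rw [fun i => (PE_filter _ (mcE_meas hk r) μ (A i) (hA i)).symm]
  unfold PE
  rw [← Finset.mul_sum]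
  gcongr
  rw [← Summable.tsum_finsetSum (fun i _ => ENNReal.summable)]
  gcongr with n
  rw [← Finset.mul_sum]
  gcongr
  unfold nInt
  have hms : ∀ i ∈ Finset.univ, Measurable fun x : Fin n → EuclideanSpace ℝ (Fin d) =>
      (fun V : Finset (EuclideanSpace ℝ (Fin d)) => mcE d k r (V.filter (· ∈ A i)))
        (Finset.image x Finset.univ) := fun i _ =>
    measurable_from_top.comp (mc_measurable_filter hk r (A i) (hA i) n)
  rw [← lintegral_finsetSum _ hms]
  have hae : ∀ᵐ x ∂(Measure.pi fun _ : Fin n => μ), ∀ j, ∃ i, x j ∈ A i :=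
    eventually_all.2 fun j =>
      (Measure.tendsto_eval_ae_ae (μ := fun _ : Fin n => μ) (i := j)).eventually
        (p := fun y => ∃ i, y ∈ A i) hcov
  refine lintegral_mono_ae (hae.mono fun x hx => ?_)
  unfold mcE
  rw [← Nat.cast_sum]
  refine Nat.cast_le.2 (mc_sub hk r _ A ?_)
  intro v hv
  obtain ⟨j, -, rfl⟩ := Finset.mem_image.1 hv
  exact hx j

lemma PE_map {d k : ℕ} (hk : 1 ≤ k) (r r' : ℝ)
    (μ : Measure (EuclideanSpace ℝ (Fin d))) [IsFiniteMeasure μ]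
    (e : EuclideanSpace ℝ (Fin d) ≃ᵐ EuclideanSpace ℝ (Fin d))
    (he : ∀ x y, dist x y ≤ r ↔ dist (e x) (e y) ≤ r') :
    PE (mcE d k r') (μ.map e) = PE (mcE d k r) μ := by
  unfold PE
  rw [Measure.map_apply e.measurable MeasurableSet.univ, Set.preimage_univ]
  congr 1
  refine tsum_congr fun n => ?_
  congr 1
  unfold nInt
  have hme : Measurable fun (x : Fin n → EuclideanSpace ℝ (Fin d)) (i : Fin n) => e (x i) :=
    measurable_pi_lambda _ fun i => e.measurable.comp (measurable_pi_apply i)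
  rw [← Measure.pi_map_pi (fun _ => e.measurable.aemeasurable),
    lintegral_map (mcE_meas hk r' n) hme]
  refine lintegral_congr fun x => ?_
  unfold mcE
  have := mc_image hk r r' (Finset.image x Finset.univ) e.toEquiv he
  rw [← this, Finset.image_image]
  rfl

/-- The cube with corner `v` and side `c`. -/
def cubeAt (d : ℕ) (v : EuclideanSpace ℝ (Fin d)) (c : ℝ) : Set (EuclideanSpace ℝ (Fin d)) :=
  {x | ∀ i, x i ∈ Set.Icc (v i) (v i + c)}

lemma cubeAt_meas (d : ℕ) (v : EuclideanSpace ℝ (Fin d)) (c : ℝ) :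
    MeasurableSet (cubeAt d v c) := by
  have : cubeAt d v c = ⋂ i, (fun x : EuclideanSpace ℝ (Fin d) => x i) ⁻¹'
      (Set.Icc (v i) (v i + c)) := by
    ext x; simp [cubeAt]
  rw [this]
  refine MeasurableSet.iInter fun i => ?_
  have hm : Measurable (fun x : EuclideanSpace ℝ (Fin d) => x i) := by fun_prop
  exact hm measurableSet_Icc

lemma unitCube_eq (d : ℕ) : unitCube d = cubeAt d 0 1 := by
  ext x; simp [unitCube, cubeAt]

lemma volume_unitCube (d : ℕ) : volume (unitCube d) = 1 := by
  have h2 : unitCube d = ((MeasurableEquiv.toLp 2 (Fin d → ℝ)).symm) ⁻¹'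
      (Set.univ.pi fun _ => Set.Icc (0 : ℝ) 1) := by
    ext x
    simp [unitCube, Pi.le_def, forall_and]
  rw [h2, (EuclideanSpace.volume_preserving_symm_measurableEquiv_toLp (Fin d)).measure_preimage_equiv,
    volume_pi_pi]
  simp

instance uniformCube_prob (d : ℕ) : IsProbabilityMeasure (uniformCube d) :=
  ⟨by rw [uniformCube, Measure.restrict_apply_univ, volume_unitCube]⟩

lemma scaling {d k : ℕ} (hk : 1 ≤ k) (r a c : ℝ) (ha : 0 ≤ a) (hc : 0 < c)
    (v : EuclideanSpace ℝ (Fin d)) :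
    PE (mcE d k r) (ENNReal.ofReal a • volume.restrict (cubeAt d v c)) =
      PE (mcE d k (r / c)) (ENNReal.ofReal (a * c ^ d) • uniformCube d) := by
  let e : EuclideanSpace ℝ (Fin d) ≃ᵐ EuclideanSpace ℝ (Fin d) :=
    ((Homeomorph.smulOfNeZero c hc.ne').trans (Homeomorph.addRight v)).toMeasurableEquiv
  have he : ∀ x, e x = c • x + v := fun x => rfl
  have hfin : IsFiniteMeasure (ENNReal.ofReal (a * c ^ d) • uniformCube d) :=
    Measure.smul_finite _ ENNReal.ofReal_ne_top
  rw [← PE_map hk (r / c) r (ENNReal.ofReal (a * c ^ d) • uniformCube d) e]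
  · congr 1
    have hvol : Measure.map e volume = ENNReal.ofReal ((c ^ d)⁻¹) • volume := by
      have h1 : (e : EuclideanSpace ℝ (Fin d) → EuclideanSpace ℝ (Fin d)) =
          (fun x => x + v) ∘ (fun x => c • x) := rfl
      rw [h1, ← Measure.map_map (measurable_add_const v) (measurable_const_smul c),
        Measure.map_addHaar_smul _ hc.ne', Measure.map_smul, map_add_right_eq_self,
        finrank_euclideanSpace_fin, abs_of_pos (by positivity)]
    have hpre : e ⁻¹' (cubeAt d v c) = unitCube d := by
      ext x
      simp only [Set.mem_preimage, he, cubeAt, unitCube, Set.mem_ofPred_eq, Set.mem_Icc,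
        PiLp.add_apply, PiLp.smul_apply, smul_eq_mul]
      refine forall_congr' fun i => ?_
      constructor
      · rintro ⟨h1, h2⟩
        constructor <;> nlinarith
      · rintro ⟨h1, h2⟩
        constructor <;> nlinarith
    rw [Measure.map_smul, uniformCube, ← hpre, ← Measure.restrict_map e.measurable
      (cubeAt_meas d v c), hvol, Measure.restrict_smul, smul_smul, ← ENNReal.ofReal_mul (by positivity)]
    congr 2
    field_simp
  · intro x y
    rw [he, he, dist_add_right, dist_smul₀, Real.norm_eq_abs, abs_of_pos hc, le_div_iff₀ hc, mul_comm]

lemma nInt_smul {d : ℕ} (f : Finset (EuclideanSpace ℝ (Fin d)) → ℝ≥0∞)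
    (μ : Measure (EuclideanSpace ℝ (Fin d))) [IsFiniteMeasure μ] (a : ℝ≥0∞) (ha : a ≠ ∞) (n : ℕ) :
    nInt f (a • μ) n = a ^ n * nInt f μ n := by
  have hfin : IsFiniteMeasure (a • μ) := Measure.smul_finite _ ha
  have : (Measure.pi fun _ : Fin n => a • μ) = a ^ n • Measure.pi fun _ : Fin n => μ := by
    refine Measure.pi_eq fun s hs => ?_
    simp [Measure.pi_pi, Finset.prod_mul_distrib]
  rw [nInt, this, lintegral_smul_measure, nInt, smul_eq_mul]

lemma nInt_le {d k : ℕ} (hk : 1 ≤ k) (r : ℝ) (n : ℕ) :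
    nInt (mcE d k r) (uniformCube d) n ≤ n := by
  unfold nInt
  calc _ ≤ ∫⁻ x : Fin n → EuclideanSpace ℝ (Fin d), (n : ℝ≥0∞)
      ∂(Measure.pi fun _ => uniformCube d) := by
        refine lintegral_mono fun x => ?_
        refine Nat.cast_le.2 ((mc_le_card hk r _).trans (Finset.card_image_le.trans ?_))
        simp
    _ = n := by simp

lemma PE_ne_top {d k : ℕ} (hk : 1 ≤ k) (r a : ℝ) :
    PE (mcE d k r) (ENNReal.ofReal a • uniformCube d) ≠ ∞ := by
  unfold PE
  refine ENNReal.mul_ne_top ENNReal.ofReal_ne_top ?_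
  have h2 : (2 * ENNReal.ofReal a) ≠ ∞ := ENNReal.mul_ne_top (by simp) ENNReal.ofReal_ne_top
  refine ne_top_of_le_ne_top (b := ∑' n : ℕ, ((n ! : ℕ) : ℝ≥0∞)⁻¹ * (2 * ENNReal.ofReal a) ^ n)
    (by rw [tsum_exp _ h2]; exact ENNReal.ofReal_ne_top) ?_
  gcongr with n
  rw [nInt_smul _ _ _ ENNReal.ofReal_ne_top, mul_pow, mul_comm]
  gcongr
  refine (nInt_le hk r n).trans ?_
  exact_mod_cast n.lt_two_pow_self.le

lemma EF_eq {d k : ℕ} (hk : 1 ≤ k) (lam t : ℝ) (h : 0 ≤ lam * t ^ d) :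
    EF d k lam t =
      (PE (mcE d k (1 / t)) (ENNReal.ofReal (lam * t ^ d) • uniformCube d)).toReal := by
  unfold PE EF
  set a := lam * t ^ d
  have hEH : ∀ n, EH d k (1 / t) n = (nInt (mcE d k (1 / t)) (uniformCube d) n).toReal := by
    intro n
    rw [EH, nInt, ← integral_toReal (mcE_meas hk _ n).aemeasurable
      (Eventually.of_forall fun x => by simp [mcE])]
    simp [mcE]
  have hu : ((ENNReal.ofReal a • uniformCube d) Set.univ).toReal = a := by
    simp [ENNReal.toReal_ofReal h]
  have hn : ∀ n : ℕ, nInt (mcE d k (1 / t)) (uniformCube d) n ≠ ∞ := fun n =>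
    ne_top_of_le_ne_top (ENNReal.natCast_ne_top n) (nInt_le hk _ n)
  rw [hu, ENNReal.toReal_mul, ENNReal.toReal_ofReal (Real.exp_pos _).le,
    ENNReal.tsum_toReal_eq, ← tsum_mul_left]
  · refine tsum_congr fun n => ?_
    rw [nInt_smul _ _ _ ENNReal.ofReal_ne_top, hEH]
    simp only [poissonPMFReal, ENNReal.toReal_mul, ENNReal.toReal_inv, ENNReal.toReal_natCast,
      ENNReal.toReal_pow, ENNReal.toReal_ofReal h, Real.coe_toNNReal a h]
    ring
  · intro n
    rw [nInt_smul _ _ _ ENNReal.ofReal_ne_top]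
    refine ENNReal.mul_ne_top ?_ (ENNReal.mul_ne_top (ENNReal.pow_ne_top ENNReal.ofReal_ne_top)
      (hn n))
    exact ENNReal.inv_ne_top.2 (by exact_mod_cast n.factorial_ne_zero)

lemma PE_scale_mono {d k : ℕ} (hk : 1 ≤ k) (lam u s : ℝ) (hlam : 0 < lam) (hu : 0 < u)
    (hus : u ≤ s) :
    PE (mcE d k (1 / u)) (ENNReal.ofReal (lam * u ^ d) • uniformCube d) ≤
      PE (mcE d k (1 / s)) (ENNReal.ofReal (lam * s ^ d) • uniformCube d) := by
  have hs : 0 < s := hu.trans_le hus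
  have hfin : IsFiniteMeasure (ENNReal.ofReal (lam * s ^ d) • uniformCube d) :=
    Measure.smul_finite _ ENNReal.ofReal_ne_top
  have h1 := PE_restrict_le hk (1 / s) (ENNReal.ofReal (lam * s ^ d) • uniformCube d)
    (cubeAt d 0 (u / s)) (cubeAt_meas d 0 _)
  have hsub : cubeAt d 0 (u / s) ∩ unitCube d = cubeAt d 0 (u / s) := by
    refine Set.inter_eq_left.2 fun x hx i => ?_
    have := hx i
    have h3 : u / s ≤ 1 := (div_le_one hs).2 hus
    simp only [PiLp.zero_apply, zero_add, Set.mem_Icc] at this ⊢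
    exact ⟨this.1, this.2.trans h3⟩
  rw [Measure.restrict_smul, uniformCube, Measure.restrict_restrict (cubeAt_meas d 0 _), hsub,
    scaling hk _ _ _ (by positivity) (by positivity)] at h1
  have e1 : 1 / s / (u / s) = 1 / u := by field_simp
  have e2 : lam * s ^ d * (u / s) ^ d = lam * u ^ d := by
    rw [mul_assoc, ← mul_pow, mul_div_cancel₀ _ hs.ne']
  rw [e1, e2] at h1
  exact h1

/-- subadditive expectation bound:
`E[F_{k,λ}(t)] ≤ ⌈t/s⌉^d E[F_{k,λ}(s)]` for `0 < s ≤ t`. -/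
theorem EF_subadditive_bound (d k : ℕ) (hd : 1 ≤ d) (hk : 1 ≤ k) (lam : ℝ) (hlam : 0 < lam)
    (s t : ℝ) (hs : 0 < s) (hst : s ≤ t) :
    EF d k lam t ≤ ((⌈t / s⌉ : ℤ) : ℝ) ^ d * EF d k lam s := by
  have ht : 0 < t := hs.trans_le hst
  obtain ⟨m, hm⟩ : ∃ m : ℕ, ⌈t / s⌉ = (m : ℤ) :=
    Int.eq_ofNat_of_zero_le (Int.ceil_nonneg (by positivity))
  have hmr : t / s ≤ (m : ℝ) := by
    have := Int.le_ceil (t / s)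
    rw [hm] at this
    exact_mod_cast this
  have hm0 : (0 : ℝ) < m := (div_pos ht hs).trans_le hmr
  have hu : t / m ≤ s := by
    rw [div_le_iff₀ hm0]
    rw [div_le_iff₀ hs] at hmr
    linarith
  have hfin : IsFiniteMeasure (ENNReal.ofReal (lam * t ^ d) • uniformCube d) :=
    Measure.smul_finite _ ENNReal.ofReal_ne_top
  let v : (Fin d → Fin m) → EuclideanSpace ℝ (Fin d) := fun i =>
    WithLp.toLp 2 fun j => ((i j : ℕ) : ℝ) / m
  have hcov : ∀ᵐ x ∂(ENNReal.ofReal (lam * t ^ d) • uniformCube d),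
      ∃ i, x ∈ cubeAt d (v i) (1 / m) := by
    apply Measure.ae_smul_measure
    rw [uniformCube, ae_restrict_iff' (by rw [unitCube_eq]; exact cubeAt_meas d 0 1)]
    refine Eventually.of_forall fun x hx => ?_
    have : ∀ j, ∃ i : Fin m, ((i : ℕ) : ℝ) / m ≤ x j ∧ x j ≤ ((i : ℕ) : ℝ) / m + 1 / m := by
      intro j
      obtain ⟨h0, h1⟩ := hx j
      have hmn : 0 < m := by exact_mod_cast hm0
      have hxm : 0 ≤ x j * m := by positivity
      by_cases hlt : x j = 1
      · refine ⟨⟨m - 1, by omega⟩, ?_⟩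
        rw [hlt]
        have : ((m - 1 : ℕ) : ℝ) = m - 1 := by
          rw [Nat.cast_sub hmn]; simp
        simp only [this]
        rw [← add_div, div_le_one hm0, le_div_iff₀ hm0]
        constructor <;> linarith
      · have hlt' : x j < 1 := lt_of_le_of_ne h1 hlt
        refine ⟨⟨⌊x j * m⌋₊, ?_⟩, ?_⟩
        · rw [Nat.floor_lt hxm]
          nlinarith
        · have h3 := Nat.floor_le hxm
          have h4 := Nat.lt_floor_add_one (x j * m)
          simp only
          rw [← add_div, div_le_iff₀ hm0, le_div_iff₀ hm0]
          exact ⟨h3, h4.le⟩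
    choose i hi using this
    exact ⟨i, fun j => hi j⟩
  have hmain := PE_cover hk (1 / t) (ENNReal.ofReal (lam * t ^ d) • uniformCube d)
    (fun i => cubeAt d (v i) (1 / m)) (fun i => cubeAt_meas d _ _) hcov
  have hterm : ∀ i, PE (mcE d k (1 / t)) ((ENNReal.ofReal (lam * t ^ d) • uniformCube d).restrict
      (cubeAt d (v i) (1 / m))) ≤
      PE (mcE d k (1 / s)) (ENNReal.ofReal (lam * s ^ d) • uniformCube d) := by
    intro i
    have hsub : cubeAt d (v i) (1 / m) ∩ unitCube d = cubeAt d (v i) (1 / m) := by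
      refine Set.inter_eq_left.2 fun x hx j => ?_
      have h3 : ((i j : ℕ) : ℝ) / m ≤ x j ∧ x j ≤ ((i j : ℕ) : ℝ) / m + 1 / m := hx j
      have h5 : ((i j : ℕ) : ℝ) + 1 ≤ m := by exact_mod_cast (i j).2
      have h6 : ((i j : ℕ) : ℝ) / m + 1 / m ≤ 1 := by
        rw [← add_div, div_le_one hm0]; exact h5
      have h7 : 0 ≤ ((i j : ℕ) : ℝ) / m := by positivity
      exact ⟨h7.trans h3.1, h3.2.trans h6⟩
    rw [Measure.restrict_smul, uniformCube, Measure.restrict_restrict (cubeAt_meas d _ _), hsub,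
      scaling hk _ _ _ (by positivity) (by positivity)]
    have e1 : 1 / t / (1 / (m : ℝ)) = 1 / (t / m) := by field_simp
    have e2 : lam * t ^ d * (1 / (m : ℝ)) ^ d = lam * (t / m) ^ d := by
      rw [mul_assoc, ← mul_pow, mul_one_div]
    rw [e1, e2]
    exact PE_scale_mono hk lam (t / m) s hlam (by positivity) hu
  have hfinal := hmain.trans (Finset.sum_le_sum fun i _ => hterm i)
  rw [Finset.sum_const, Finset.card_univ, Fintype.card_fun, Fintype.card_fin, Fintype.card_fin,
    nsmul_eq_mul] at hfinal
  rw [EF_eq hk lam t (by positivity), EF_eq hk lam s (by positivity), hm]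
  have := ENNReal.toReal_mono (ENNReal.mul_ne_top (ENNReal.natCast_ne_top _) (PE_ne_top hk _ _))
    hfinal
  rw [ENNReal.toReal_mul, ENNReal.toReal_natCast] at this
  simpa using this
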